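/- Let L₁ be a non-degenerate even lattice for which there exists a non-degenerate even lattice L₂ such that (a) there is an essentially unique even unimodular overlattice Γ ⊆ L₁^∨ ⊕ L₂^∨ containing both L₁ and L₂ primitively (unique up to composition with automorphisms of L₁ and L₂), and (b) the restriction map O(Γ, L₂) → O(L₂) is surjective. Then the natural map O(L₁) → O(q(L₁)) is surjective. -/

import Mathlib

/-! The proof is Nikulin's gluing argument. Fix a good overlattice `Γ` and an isometry `ψ` of
the discriminant form of `L₁`. Twisting the first component by `ψ`,
`Γ' = {(a, b) | ∃ a₀, (a₀, b) ∈ Γ and ψ[a₀] = [a]}`,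
gives again a good overlattice (`twist_good`): `ψ` preserves the quadratic form modulo `2ℤ`, hence
by polarisation the bilinear form modulo `ℤ` (`bilin_of_quad`), so evenness and self-duality carry
over, while primitivity says that the glue relation is injective on both sides.

By uniqueness `(P₁, P₂) Γ = Γ'` for isometries `P₁, P₂`. The isometry `P₂⁻¹` of `L₂` extends to an
isometry `g` of `Γ`; it preserves `L₂ ⊗ ℚ`, hence its orthogonal complement, so
`g = (R, P₂⁻¹)` with `R` an isometry of `L₁` (`extension_splits`). Therefore `(P₁ R, 1) Γ ⊆ Γ'`,
which says that `P₁ R` induces `ψ` on every class that occurs as a first component of `Γ`.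
Unimodularity of `Γ` and primitivity of `L₁` show that all classes occur (`proj_surj`). -/

open Matrix

/-- The bilinear form on `ℚⁿ` associated to an integer Gram matrix `M`. -/
noncomputable def ratForm {n : ℕ} (M : Matrix (Fin n) (Fin n) ℤ)
    (x y : Fin n → ℚ) : ℚ :=
  dotProduct x ((M.map (Int.cast : ℤ → ℚ)).mulVec y)

/-- The lattice `ℤⁿ` as a `ℤ`-submodule of `ℚⁿ`. -/
def intLat (n : ℕ) : Submodule ℤ (Fin n → ℚ) where
  carrier := {x | ∀ i, ∃ a : ℤ, (a : ℚ) = x i}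
  add_mem' := by
    intro x y hx hy i
    obtain ⟨a, ha⟩ := hx i; obtain ⟨b, hb⟩ := hy i
    exact ⟨a + b, by push_cast; rw [ha, hb]; rfl⟩
  zero_mem' := fun i => ⟨0, by simp⟩
  smul_mem' := by
    intro c x hx i
    obtain ⟨a, ha⟩ := hx i
    exact ⟨c * a, by push_cast; rw [ha]; simp [zsmul_eq_mul]⟩

/-- The dual lattice `L^∨` of the lattice `ℤⁿ` with Gram matrix `M`. -/
noncomputable def dualLat {n : ℕ} (M : Matrix (Fin n) (Fin n) ℤ) :
    Submodule ℤ (Fin n → ℚ) :=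
  Submodule.comap
    ((Matrix.mulVecLin (M.map (Int.cast : ℤ → ℚ))).restrictScalars ℤ) (intLat n)

/-- The discriminant group `A(L) = L^∨/L`. -/
noncomputable abbrev discGroup {n : ℕ} (M : Matrix (Fin n) (Fin n) ℤ) :=
  (dualLat M) ⧸ (Submodule.comap (dualLat M).subtype (intLat n))

/-- The class of `x ∈ L^∨` in `A(L)`. -/
noncomputable def discMk {n : ℕ} (M : Matrix (Fin n) (Fin n) ℤ) (x : dualLat M) :
    discGroup M := Submodule.Quotient.mk x

/-- `Γ ⊆ L₁^∨ ⊕ L₂^∨` is an even unimodular overlattice containing `L₁` and `L₂`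
primitively. -/
noncomputable def IsGoodOverlattice {n₁ n₂ : ℕ} (M₁ : Matrix (Fin n₁) (Fin n₁) ℤ)
    (M₂ : Matrix (Fin n₂) (Fin n₂) ℤ)
    (Γ : Set ((Fin n₁ → ℚ) × (Fin n₂ → ℚ))) : Prop :=
  letI φ : ((Fin n₁ → ℚ) × (Fin n₂ → ℚ)) → ((Fin n₁ → ℚ) × (Fin n₂ → ℚ)) → ℚ :=
    fun z w => ratForm M₁ z.1 w.1 + ratForm M₂ z.2 w.2
  ((0 : (Fin n₁ → ℚ) × (Fin n₂ → ℚ)) ∈ Γ ∧ ∀ z ∈ Γ, ∀ w ∈ Γ, z - w ∈ Γ) ∧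
  (∀ z ∈ Γ, z.1 ∈ dualLat M₁ ∧ z.2 ∈ dualLat M₂) ∧
  (∀ z ∈ Γ, ∀ w ∈ Γ, ∃ c : ℤ, (c : ℚ) = φ z w) ∧
  (∀ z ∈ Γ, ∃ k : ℤ, φ z z = 2 * (k : ℚ)) ∧
  ({z | ∀ w ∈ Γ, ∃ c : ℤ, (c : ℚ) = φ z w} = Γ) ∧
  ({z | z.1 ∈ intLat n₁ ∧ z.2 = 0} ⊆ Γ ∧
    ∀ z ∈ Γ, (∃ k : ℤ, k ≠ 0 ∧ k • z ∈ {z' : (Fin n₁ → ℚ) × (Fin n₂ → ℚ) |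
      z'.1 ∈ intLat n₁ ∧ z'.2 = 0}) → z.1 ∈ intLat n₁ ∧ z.2 = 0) ∧
  ({z | z.1 = 0 ∧ z.2 ∈ intLat n₂} ⊆ Γ ∧
    ∀ z ∈ Γ, (∃ k : ℤ, k ≠ 0 ∧ k • z ∈ {z' : (Fin n₁ → ℚ) × (Fin n₂ → ℚ) |
      z'.1 = 0 ∧ z'.2 ∈ intLat n₂}) → z.1 = 0 ∧ z.2 ∈ intLat n₂)

section Helpers

/-! ### Integrality and the rational bilinear form -/

/-- The rational number `q` is an integer. -/
def IsZ (q : ℚ) : Prop := ∃ c : ℤ, (c : ℚ) = q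

lemma IsZ.add {p q : ℚ} (hp : IsZ p) (hq : IsZ q) : IsZ (p + q) := by
  obtain ⟨a, rfl⟩ := hp; obtain ⟨b, rfl⟩ := hq
  exact ⟨a + b, by push_cast; rfl⟩

lemma IsZ.sub {p q : ℚ} (hp : IsZ p) (hq : IsZ q) : IsZ (p - q) := by
  obtain ⟨a, rfl⟩ := hp; obtain ⟨b, rfl⟩ := hq
  exact ⟨a - b, by push_cast; rfl⟩

lemma IsZ.mul {p q : ℚ} (hp : IsZ p) (hq : IsZ q) : IsZ (p * q) := by
  obtain ⟨a, rfl⟩ := hp; obtain ⟨b, rfl⟩ := hq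
  exact ⟨a * b, by push_cast; rfl⟩

lemma IsZ.sum {ι : Type*} {s : Finset ι} {f : ι → ℚ} (h : ∀ i ∈ s, IsZ (f i)) :
    IsZ (∑ i ∈ s, f i) :=
  Finset.sum_induction f IsZ (fun _ _ => IsZ.add) ⟨0, by simp⟩ h

variable {n : ℕ} (M : Matrix (Fin n) (Fin n) ℤ)

lemma ratForm_add_left (x y z : Fin n → ℚ) :
    ratForm M (x + y) z = ratForm M x z + ratForm M y z := add_dotProduct _ _ _

lemma ratForm_sub_left (x y z : Fin n → ℚ) :
    ratForm M (x - y) z = ratForm M x z - ratForm M y z := sub_dotProduct _ _ _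

lemma ratForm_add_right (x y z : Fin n → ℚ) :
    ratForm M x (y + z) = ratForm M x y + ratForm M x z := by
  simp [ratForm, mulVec_add, dotProduct_add]

lemma ratForm_sub_right (x y z : Fin n → ℚ) :
    ratForm M x (y - z) = ratForm M x y - ratForm M x z := by
  simp [ratForm, mulVec_sub, dotProduct_sub]

@[simp] lemma ratForm_zero_left (x : Fin n → ℚ) : ratForm M 0 x = 0 := zero_dotProduct _

@[simp] lemma ratForm_zero_right (x : Fin n → ℚ) : ratForm M x 0 = 0 := by
  simp [ratForm]

lemma ratForm_comm {M : Matrix (Fin n) (Fin n) ℤ} (hs : M.transpose = M) (x y : Fin n → ℚ) :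
    ratForm M x y = ratForm M y x := by
  unfold ratForm
  have h : (M.map (Int.cast : ℤ → ℚ))ᵀ = M.map (Int.cast : ℤ → ℚ) := by
    rw [← transpose_map, hs]
  rw [dotProduct_mulVec, ← mulVec_transpose, h, dotProduct_comm]

lemma mem_dual_iff (x : Fin n → ℚ) :
    x ∈ dualLat M ↔ ∀ i, IsZ (((M.map (Int.cast : ℤ → ℚ)).mulVec x) i) := Iff.rfl

lemma mem_intLat_iff (x : Fin n → ℚ) : x ∈ intLat n ↔ ∀ i, IsZ (x i) := Iff.rfl

lemma mulVec_intLat {x : Fin n → ℚ} (hx : x ∈ intLat n) :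
    (M.map (Int.cast : ℤ → ℚ)).mulVec x ∈ intLat n := by
  intro i
  exact IsZ.sum (s := Finset.univ) (f := fun j => (M i j : ℚ) * x j)
    fun j _ => IsZ.mul ⟨M i j, rfl⟩ (hx j)

lemma intLat_le_dual : intLat n ≤ dualLat M := fun _ hx => mulVec_intLat M hx

lemma single_mem (i : Fin n) : (Pi.single i 1 : Fin n → ℚ) ∈ intLat n := by
  intro j
  by_cases h : j = i
  · subst h; exact ⟨1, by simp⟩
  · exact ⟨0, by simp [h]⟩

lemma ratForm_isZ {x y : Fin n → ℚ} (hx : x ∈ intLat n) (hy : y ∈ dualLat M) :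
    IsZ (ratForm M x y) :=
  IsZ.sum (s := Finset.univ) (f := fun i => x i * (M.map (Int.cast : ℤ → ℚ)).mulVec y i)
    fun i _ => IsZ.mul (hx i) (hy i)

lemma mem_dual_of_forall {y : Fin n → ℚ} (h : ∀ x ∈ intLat n, IsZ (ratForm M x y)) :
    y ∈ dualLat M := by
  intro i
  have := h _ (single_mem i)
  rwa [ratForm, single_one_dotProduct] at this

/-- Clearing denominators: `ℤⁿ` spans `ℚⁿ` over `ℚ`. -/
lemma exists_smul_mem (x : Fin n → ℚ) : ∃ k : ℤ, k ≠ 0 ∧ k • x ∈ intLat n := by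
  obtain ⟨b, hb⟩ := IsLocalization.exist_integer_multiples_of_finite (nonZeroDivisors ℤ) x
  refine ⟨b, nonZeroDivisors.ne_zero b.2, fun i => ?_⟩
  obtain ⟨c, hc⟩ := hb i
  exact ⟨c, by simpa using hc⟩

lemma det_rat_isUnit (hd : M.det ≠ 0) : IsUnit (M.map (Int.cast : ℤ → ℚ)).det := by
  have : (M.map (Int.cast : ℤ → ℚ)).det = (M.det : ℚ) := (Int.cast_det M).symm
  rw [this]
  exact (Int.cast_ne_zero.mpr hd).isUnit

lemma eq_zero_of_forall (hd : M.det ≠ 0) {y : Fin n → ℚ} (h : ∀ x, ratForm M x y = 0) :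
    y = 0 := by
  have h1 : (M.map (Int.cast : ℤ → ℚ)).mulVec y = 0 := by
    funext i
    have := h (Pi.single i 1)
    rwa [ratForm, single_one_dotProduct] at this
  exact eq_zero_of_mulVec_eq_zero (det_rat_isUnit M hd).ne_zero h1

/-! ### Isometries given by integer matrices -/

lemma map_cast_mul (A B : Matrix (Fin n) (Fin n) ℤ) :
    (A * B).map (Int.cast : ℤ → ℚ) = A.map (Int.cast : ℤ → ℚ) * B.map (Int.cast : ℤ → ℚ) :=
  Matrix.map_mul (f := Int.castRingHom ℚ)

lemma ratForm_mulVec (P : Matrix (Fin n) (Fin n) ℤ) (x y : Fin n → ℚ) :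
    ratForm M ((P.map (Int.cast : ℤ → ℚ)).mulVec x) ((P.map (Int.cast : ℤ → ℚ)).mulVec y)
      = ratForm (P.transpose * M * P) x y := by
  unfold ratForm
  rw [map_cast_mul, map_cast_mul, transpose_map, ← mulVec_mulVec, ← mulVec_mulVec,
    dotProduct_mulVec x, vecMul_transpose]

lemma ratForm_single (i j : Fin n) : ratForm M (Pi.single i 1) (Pi.single j 1) = M i j := by
  simp [ratForm]

lemma isometry_det_isUnit (hd : M.det ≠ 0) {P : Matrix (Fin n) (Fin n) ℤ}
    (hP : P.transpose * M * P = M) : IsUnit P.det := by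
  have h := congrArg det hP
  rw [det_mul, det_mul, det_transpose] at h
  have h2 : P.det * P.det = 1 := by
    apply mul_right_cancel₀ hd
    linear_combination h
  exact IsUnit.of_mul_eq_one _ h2

lemma gram_isometry_inv (hd : M.det ≠ 0) {P : Matrix (Fin n) (Fin n) ℤ}
    (hP : P.transpose * M * P = M) : (P⁻¹).transpose * M * P⁻¹ = M := by
  have hu := isometry_det_isUnit M hd hP
  have hu' : IsUnit Pᵀ.det := by rwa [det_transpose]
  conv_lhs => rw [← hP]
  rw [transpose_nonsing_inv, ← Matrix.mul_assoc, ← Matrix.mul_assoc, nonsing_inv_mul _ hu',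
    Matrix.one_mul, Matrix.mul_assoc, mul_nonsing_inv _ hu, Matrix.mul_one]

lemma mulVec_inv_cancel (hd : M.det ≠ 0) {P : Matrix (Fin n) (Fin n) ℤ}
    (hP : P.transpose * M * P = M) (y : Fin n → ℚ) :
    (P.map (Int.cast : ℤ → ℚ)).mulVec ((P⁻¹.map (Int.cast : ℤ → ℚ)).mulVec y) = y := by
  have hu := isometry_det_isUnit M hd hP
  have h : P.map (Int.cast : ℤ → ℚ) * P⁻¹.map (Int.cast : ℤ → ℚ) = 1 := by
    rw [← map_cast_mul, mul_nonsing_inv P hu]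
    exact Matrix.map_one _ Int.cast_zero Int.cast_one
  rw [mulVec_mulVec, h, one_mulVec]

/-! ### The discriminant group -/

lemma discMk_eq_iff (x y : dualLat M) :
    discMk M x = discMk M y ↔ (x : Fin n → ℚ) - y ∈ intLat n :=
  Submodule.Quotient.eq _

lemma discMk_surj (a : discGroup M) : ∃ x, discMk M x = a := Submodule.Quotient.mk_surjective _ a

lemma discMk_add (x y : dualLat M) : discMk M (x + y) = discMk M x + discMk M y := rfl

lemma discMk_sub (x y : dualLat M) : discMk M (x - y) = discMk M x - discMk M y := rfl

lemma discMk_zero : discMk M 0 = 0 := rfl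

lemma discMk_eq_zero_iff (x : dualLat M) : discMk M x = 0 ↔ (x : Fin n → ℚ) ∈ intLat n := by
  rw [← discMk_zero, discMk_eq_iff]; simp

lemma circle_eq_iff (a b : ℚ) :
    ((a : ℚ) : AddCircle (2 : ℚ)) = (b : AddCircle (2 : ℚ)) ↔ ∃ k : ℤ, a - b = 2 * (k : ℚ) := by
  rw [eq_comm, QuotientAddGroup.eq, AddSubgroup.mem_zmultiples_iff]
  constructor
  · rintro ⟨k, hk⟩
    exact ⟨k, by rw [zsmul_eq_mul] at hk; linarith⟩
  · rintro ⟨k, hk⟩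
    exact ⟨k, by rw [zsmul_eq_mul]; linarith⟩

/-- A group automorphism preserving the discriminant quadratic form modulo `2ℤ` preserves the
discriminant bilinear form modulo `ℤ`, by polarisation. -/
lemma bilin_of_quad {M : Matrix (Fin n) (Fin n) ℤ} (hs : M.transpose = M)
    (ψ : discGroup M ≃+ discGroup M)
    (hψ : ∀ x y : dualLat M, ψ (discMk M x) = discMk M y →
        ((ratForm M x x : ℚ) : AddCircle (2 : ℚ)) = ((ratForm M y y : ℚ) : AddCircle (2 : ℚ)))
    {x x' y y' : dualLat M} (hx : ψ (discMk M x) = discMk M x')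
    (hy : ψ (discMk M y) = discMk M y') :
    IsZ (ratForm M x y - ratForm M x' y') := by
  obtain ⟨a, ha⟩ := (circle_eq_iff _ _).1 (hψ x x' hx)
  obtain ⟨b, hb⟩ := (circle_eq_iff _ _).1 (hψ y y' hy)
  obtain ⟨c, hc⟩ := (circle_eq_iff _ _).1 (hψ (x + y) (x' + y')
    (by rw [discMk_add, map_add, hx, hy, discMk_add]))
  refine ⟨c - a - b, ?_⟩
  simp only [Submodule.coe_add, ratForm_add_left, ratForm_add_right] at hc
  rw [ratForm_comm hs (y : Fin n → ℚ) x, ratForm_comm hs (y' : Fin n → ℚ) x'] at hc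
  push_cast
  linarith

end Helpers

section Glue

/-! ### Overlattices and gluing -/

variable {n₁ n₂ : ℕ} {M₁ : Matrix (Fin n₁) (Fin n₁) ℤ} {M₂ : Matrix (Fin n₂) (Fin n₂) ℤ}
  {Γ : Set ((Fin n₁ → ℚ) × (Fin n₂ → ℚ))}

/-- Primitivity of `L₁` in `Γ`, with the multiple making `a` integral supplied by clearing
denominators. -/
lemma good_left (h : IsGoodOverlattice M₁ M₂ Γ) {a : Fin n₁ → ℚ} (ha : (a, 0) ∈ Γ) :
    a ∈ intLat n₁ := by
  obtain ⟨-, -, -, -, -, ⟨-, hp⟩, -⟩ := h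
  obtain ⟨k, hk, hka⟩ := exists_smul_mem a
  exact (hp _ ha ⟨k, hk, hka, smul_zero k⟩).1

lemma good_right (h : IsGoodOverlattice M₁ M₂ Γ) {b : Fin n₂ → ℚ} (hb : (0, b) ∈ Γ) :
    b ∈ intLat n₂ := by
  obtain ⟨-, -, -, -, -, -, ⟨-, hp⟩⟩ := h
  obtain ⟨k, hk, hkb⟩ := exists_smul_mem b
  exact (hp _ hb ⟨k, hk, smul_zero k, hkb⟩).2

/-- Every element of `L₁^∨` is the first component of an element of `Γ`. Otherwise a character of
`L₁^∨` vanishing on the first components of `Γ`, but not on `x`, has the form `v ↦ (u, v) mod ℤ`;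
then `(u, 0)` is in the dual of `Γ`, which is `Γ`, so `u ∈ L₁` and the character is trivial. -/
lemma proj_surj (hd₁ : M₁.det ≠ 0) (h : IsGoodOverlattice M₁ M₂ Γ)
    (x : dualLat M₁) : ∃ b, ((x : Fin n₁ → ℚ), b) ∈ Γ := by
  have h' := h
  obtain ⟨⟨h0, hsub⟩, hdual, -, -, hself, -, -⟩ := h'
  let N : AddSubgroup (dualLat M₁) := AddSubgroup.ofSub
    {v | ∃ b, ((v : Fin n₁ → ℚ), b) ∈ Γ} ⟨0, 0, h0⟩ (by
      rintro v ⟨b, hb⟩ w ⟨c, hc⟩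
      refine ⟨b - c, ?_⟩
      simpa [sub_eq_add_neg] using hsub _ hb _ hc)
  by_contra hx
  have hxN : (QuotientAddGroup.mk x : dualLat M₁ ⧸ N) ≠ 0 := by
    rw [Ne, QuotientAddGroup.eq_zero_iff]; exact hx
  obtain ⟨χ, hχ⟩ := CharacterModule.exists_character_apply_ne_zero_of_ne_zero hxN
  let f : dualLat M₁ →+ AddCircle (1 : ℚ) := χ.comp (QuotientAddGroup.mk' N)
  set A := M₁.map (Int.cast : ℤ → ℚ) with hA
  have hu := det_rat_isUnit M₁ hd₁
  -- the basis of `L₁^∨` dual to the standard basis of `ℤⁿ`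
  let d : Fin n₁ → dualLat M₁ := fun i => ⟨A⁻¹.mulVec (Pi.single i 1), by
    rw [mem_dual_iff]
    rw [← hA, mulVec_mulVec, mul_nonsing_inv _ hu, one_mulVec]
    exact single_mem i⟩
  choose u hu' using fun i => QuotientAddGroup.mk_surjective (f (d i))
  have hf : ∀ v : dualLat M₁, f v = ((ratForm M₁ u v : ℚ) : AddCircle (1 : ℚ)) := by
    intro v
    choose c hc using v.2
    have hv : v = ∑ i, c i • d i := by
      apply Subtype.ext
      have : (v : Fin n₁ → ℚ) = A⁻¹.mulVec (A.mulVec v) := by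
        rw [mulVec_mulVec, nonsing_inv_mul _ hu, one_mulVec]
      rw [this]
      have h2 : A.mulVec v = ∑ i, c i • (Pi.single i 1 : Fin n₁ → ℚ) := by
        funext j
        have := hc j
        simp [Finset.sum_apply, Pi.single_apply]
        exact this.symm
      rw [h2, mulVec_sum]
      rw [AddSubmonoidClass.coe_finsetSum]
      refine Finset.sum_congr rfl fun i _ => ?_
      exact map_zsmul (Matrix.mulVecLin A⁻¹) _ _
    have hr : ratForm M₁ u v = ∑ i, c i • u i := by
      unfold ratForm dotProduct
      refine Finset.sum_congr rfl fun i _ => ?_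
      have := hc i
      rw [zsmul_eq_mul, this, mul_comm]; rfl
    rw [hr]
    conv_lhs => rw [hv]
    rw [map_sum]
    simp only [map_zsmul]
    rw [← QuotientAddGroup.coe_mk' , map_sum]
    refine Finset.sum_congr rfl fun i _ => ?_
    rw [map_zsmul, ← hu' i]; rfl
  have hz : ∀ v : dualLat M₁, f v = 0 ↔ IsZ (ratForm M₁ u v) := by
    intro v
    rw [hf, QuotientAddGroup.eq_zero_iff, AddSubgroup.mem_zmultiples_iff]
    simp [IsZ]
  have hu0 : (u, 0) ∈ Γ := by
    rw [← hself]
    intro w hw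
    have : f ⟨w.1, (hdual w hw).1⟩ = 0 := by
      have hm : (QuotientAddGroup.mk ⟨w.1, (hdual w hw).1⟩ : dualLat M₁ ⧸ N) = 0 := by
        rw [QuotientAddGroup.eq_zero_iff]; exact ⟨w.2, hw⟩
      change χ _ = 0
      exact (congrArg χ hm).trans (map_zero χ)
    simpa [IsZ] using (hz _).1 this
  exact hχ ((hz x).2 (ratForm_isZ M₁ (good_left h hu0) x.2))

/-- The overlattice obtained from `Γ` by twisting the gluing by an automorphism `ψ` of the
discriminant group of `L₁`. -/
def twist (ψ : discGroup M₁ ≃+ discGroup M₁) (Γ : Set ((Fin n₁ → ℚ) × (Fin n₂ → ℚ))) :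
    Set ((Fin n₁ → ℚ) × (Fin n₂ → ℚ)) :=
  {z | ∃ a₀ a : dualLat M₁, z.1 = a ∧ (↑a₀, z.2) ∈ Γ ∧ ψ (discMk M₁ a₀) = discMk M₁ a}

/-- Self-duality of the twist reduces to that of `Γ`: if `(a, b)` is integral on the twist and
`ψ[a₀] = [a]`, then `(a₀, b)` is integral on `Γ`, because `ψ` preserves the bilinear form
modulo `ℤ`. -/
lemma twist_good (hs₁ : M₁.transpose = M₁) (ψ : discGroup M₁ ≃+ discGroup M₁)
    (hψ : ∀ x y : dualLat M₁, ψ (discMk M₁ x) = discMk M₁ y →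
        ((ratForm M₁ x x : ℚ) : AddCircle (2 : ℚ)) = ((ratForm M₁ y y : ℚ) : AddCircle (2 : ℚ)))
    (h : IsGoodOverlattice M₁ M₂ Γ) : IsGoodOverlattice M₁ M₂ (twist ψ Γ) := by
  have h' := h
  obtain ⟨⟨h0, hsub⟩, hdual, hint, heven, hself, ⟨hL1, -⟩, ⟨hL2, -⟩⟩ := h'
  have hint' : ∀ z ∈ twist ψ Γ, ∀ w ∈ twist ψ Γ,
      IsZ (ratForm M₁ z.1 w.1 + ratForm M₂ z.2 w.2) := by
    rintro ⟨z1, z2⟩ ⟨a₀, a, rfl, hz, ha⟩ ⟨w1, w2⟩ ⟨b₀, b, rfl, hw, hb⟩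
    have h1 := IsZ.sub (hint _ hz _ hw) (bilin_of_quad hs₁ ψ hψ ha hb)
    dsimp only at h1 ⊢
    convert h1 using 1
    ring
  have hL1' : {z : (Fin n₁ → ℚ) × (Fin n₂ → ℚ) | z.1 ∈ intLat n₁ ∧ z.2 = 0} ⊆ twist ψ Γ := by
    rintro ⟨z1, z2⟩ ⟨hz1, hz2⟩
    dsimp only at hz1 hz2
    subst hz2
    refine ⟨0, ⟨z1, intLat_le_dual M₁ hz1⟩, rfl, h0, ?_⟩
    rw [discMk_zero, map_zero, eq_comm, discMk_eq_zero_iff]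
    exact hz1
  have hL2' : {z : (Fin n₁ → ℚ) × (Fin n₂ → ℚ) | z.1 = 0 ∧ z.2 ∈ intLat n₂} ⊆ twist ψ Γ := by
    rintro ⟨z1, z2⟩ ⟨hz1, hz2⟩
    dsimp only at hz1 hz2
    subst hz1
    exact ⟨0, 0, rfl, hL2 ⟨rfl, hz2⟩, by rw [discMk_zero, map_zero]⟩
  refine ⟨⟨hL1' ⟨zero_mem _, rfl⟩, ?_⟩, ?_, hint', ?_, ?_, ⟨hL1', ?_⟩, ⟨hL2', ?_⟩⟩
  · rintro ⟨z1, z2⟩ ⟨a₀, a, rfl, hz, ha⟩ ⟨w1, w2⟩ ⟨b₀, b, rfl, hw, hb⟩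
    exact ⟨a₀ - b₀, a - b, rfl, hsub _ hz _ hw, by
      rw [discMk_sub, map_sub, ha, hb, discMk_sub]⟩
  · rintro ⟨z1, z2⟩ ⟨a₀, a, rfl, hz, ha⟩
    exact ⟨a.2, (hdual _ hz).2⟩
  · rintro ⟨z1, z2⟩ ⟨a₀, a, rfl, hz, ha⟩
    obtain ⟨k, hk⟩ := heven _ hz
    obtain ⟨l, hl⟩ := (circle_eq_iff _ _).1 (hψ _ _ ha)
    exact ⟨k - l, by dsimp only at hk ⊢; push_cast; linarith⟩
  · refine Set.Subset.antisymm ?_ hint'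
    rintro ⟨a, b⟩ hz
    have ha : a ∈ dualLat M₁ := by
      refine mem_dual_of_forall M₁ fun x hx => ?_
      have := hz (x, 0) (hL1' ⟨hx, rfl⟩)
      rw [ratForm_comm hs₁]
      simpa [IsZ] using this
    obtain ⟨a₀, ha₀⟩ := discMk_surj M₁ (ψ.symm (discMk M₁ ⟨a, ha⟩))
    have hψa : ψ (discMk M₁ a₀) = discMk M₁ ⟨a, ha⟩ := by rw [ha₀, ψ.apply_symm_apply]
    refine ⟨a₀, ⟨a, ha⟩, rfl, ?_, hψa⟩
    rw [← hself]
    rintro ⟨x, y⟩ hxy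
    obtain ⟨x', hx'⟩ := discMk_surj M₁ (ψ (discMk M₁ ⟨x, (hdual _ hxy).1⟩))
    have h1 := hz (x', y) ⟨⟨x, (hdual _ hxy).1⟩, x', rfl, hxy, hx'.symm⟩
    have h2 := IsZ.add h1 (bilin_of_quad hs₁ ψ hψ hψa hx'.symm)
    change IsZ _
    dsimp only at h2 ⊢
    convert h2 using 1
    ring
  · rintro ⟨z1, z2⟩ ⟨a₀, a, rfl, hz, ha⟩ ⟨k, hk, -, hk2⟩
    have hz2 : z2 = 0 := (smul_eq_zero.1 hk2).resolve_left hk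
    subst hz2
    refine ⟨?_, rfl⟩
    rw [(discMk_eq_zero_iff M₁ a₀).2 (good_left h hz), map_zero] at ha
    exact (discMk_eq_zero_iff M₁ a).1 ha.symm
  · rintro ⟨z1, z2⟩ ⟨a₀, a, rfl, hz, ha⟩ ⟨k, hk, hk1, -⟩
    have ha0 : (a : Fin n₁ → ℚ) = 0 := (smul_eq_zero.1 hk1).resolve_left hk
    refine ⟨ha0, ?_⟩
    have : discMk M₁ a = 0 := (discMk_eq_zero_iff M₁ a).2 (by rw [ha0]; exact zero_mem _)
    rw [this, map_eq_zero_iff ψ ψ.injective, discMk_eq_zero_iff] at ha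
    have h3 := hsub _ hz (a₀, 0) (hL1 ⟨ha, rfl⟩)
    exact good_right h (by simpa using h3)

/-- An isometry `g` of `Γ` extending an isometry `Q` of `L₂` has the form `(R, Q)` with `R` an
isometry of `L₁`, since `g` preserves the orthogonal complement of `L₂ ⊗ ℚ`. -/
lemma extension_splits (hd₂ : M₂.det ≠ 0)
    (h : IsGoodOverlattice M₁ M₂ Γ) {Q : Matrix (Fin n₂) (Fin n₂) ℤ}
    (hQ : Q.transpose * M₂ * Q = M₂)
    (g : ((Fin n₁ → ℚ) × (Fin n₂ → ℚ)) ≃ₗ[ℚ] ((Fin n₁ → ℚ) × (Fin n₂ → ℚ)))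
    (hg : ∀ z w, ratForm M₁ (g z).1 (g w).1 + ratForm M₂ (g z).2 (g w).2 =
              ratForm M₁ z.1 w.1 + ratForm M₂ z.2 w.2)
    (hgΓ : g '' Γ = Γ)
    (hgQ : ∀ y ∈ intLat n₂, g (0, y) = (0, (Q.map (Int.cast : ℤ → ℚ)).mulVec y)) :
    ∃ R : Matrix (Fin n₁) (Fin n₁) ℤ, R.transpose * M₁ * R = M₁ ∧
      ∀ z, g z = ((R.map (Int.cast : ℤ → ℚ)).mulVec z.1,
        (Q.map (Int.cast : ℤ → ℚ)).mulVec z.2) := by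
  have hgQ' : ∀ y, g (0, y) = (0, (Q.map (Int.cast : ℤ → ℚ)).mulVec y) := by
    intro y
    obtain ⟨k, hk, hky⟩ := exists_smul_mem y
    have h1 := hgQ _ hky
    have h2 : ((0 : Fin n₁ → ℚ), k • y) = k • (0, y) := by simp
    rw [h2, map_zsmul, mulVec_smul] at h1
    have h3 : k • g (0, y) = k • ((0 : Fin n₁ → ℚ), (Q.map (Int.cast : ℤ → ℚ)).mulVec y) := by
      rw [h1]; simp
    exact smul_right_injective _ hk h3
  have hg2 : ∀ x, (g (x, 0)).2 = 0 := by
    intro x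
    apply eq_zero_of_forall M₂ hd₂
    intro y
    have h1 := hg (0, (Q⁻¹.map (Int.cast : ℤ → ℚ)).mulVec y) (x, 0)
    rw [hgQ', mulVec_inv_cancel M₂ hd₂ hQ] at h1
    simpa using h1
  have hint : ∀ j, (g (Pi.single j 1, 0)).1 ∈ intLat n₁ := by
    intro j
    apply good_left h
    have he : ((g (Pi.single j 1, 0)).1, (0 : Fin n₂ → ℚ)) = g (Pi.single j 1, 0) :=
      Prod.ext rfl (hg2 _).symm
    rw [he, ← hgΓ]
    obtain ⟨-, -, -, -, -, ⟨hL1, -⟩, -⟩ := h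
    exact ⟨_, hL1 ⟨single_mem j, rfl⟩, rfl⟩
  choose r hr using hint
  let R : Matrix (Fin n₁) (Fin n₁) ℤ := Matrix.of fun i j => r j i
  let ρ : (Fin n₁ → ℚ) →ₗ[ℚ] (Fin n₁ → ℚ) :=
    LinearMap.fst ℚ _ _ ∘ₗ g.toLinearMap ∘ₗ LinearMap.inl ℚ _ _
  have hρ : ρ = Matrix.mulVecLin (R.map (Int.cast : ℤ → ℚ)) := by
    apply LinearMap.pi_ext'
    intro j
    ext i
    simp [ρ, R, hr]
  have hR : ∀ x, g (x, 0) = ((R.map (Int.cast : ℤ → ℚ)).mulVec x, 0) := fun x =>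
    Prod.ext (LinearMap.congr_fun hρ x) (hg2 x)
  refine ⟨R, ?_, ?_⟩
  · ext i j
    have h1 := hg (Pi.single i 1, 0) (Pi.single j 1, 0)
    simp only [hR, ratForm_zero_left, add_zero, ratForm_mulVec, ratForm_single] at h1
    exact_mod_cast h1
  · rintro ⟨x, y⟩
    have : (x, y) = (x, (0 : Fin n₂ → ℚ)) + (0, y) := by simp
    rw [this, map_add, hR, hgQ']
    simp

end Glue

/-- Criterion for surjectivity of `O(L₁) → O(q(L₁))`.  Suppose there exists a
non-degenerate even lattice `L₂` (Gram matrix `M₂`) such that (a) there is an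
essentially unique even unimodular overlattice `Γ ⊆ L₁^∨ ⊕ L₂^∨` containing `L₁`
and `L₂` primitively — unique up to isometries of `L₁` and `L₂` — and (b) every
isometry of `L₂` extends to an isometry of `Γ` preserving `L₂`.  Then every
automorphism of the discriminant form `q(L₁)` is induced by an isometry of `L₁`. -/
theorem O_to_Oq_surjective_of_good_overlattice
    {n₁ : ℕ} (M₁ : Matrix (Fin n₁) (Fin n₁) ℤ)
    (hs₁ : M₁.transpose = M₁) (hd₁ : M₁.det ≠ 0) (he₁ : ∀ i, Even (M₁ i i))
    (hL₂ : ∃ (n₂ : ℕ) (M₂ : Matrix (Fin n₂) (Fin n₂) ℤ),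
      M₂.transpose = M₂ ∧ M₂.det ≠ 0 ∧ (∀ i, Even (M₂ i i)) ∧
      -- (a) existence and essential uniqueness of the overlattice:
      (∃ Γ, IsGoodOverlattice M₁ M₂ Γ) ∧
      (∀ Γ Γ', IsGoodOverlattice M₁ M₂ Γ → IsGoodOverlattice M₁ M₂ Γ' →
        ∃ (P₁ : Matrix (Fin n₁) (Fin n₁) ℤ) (P₂ : Matrix (Fin n₂) (Fin n₂) ℤ),
          P₁.transpose * M₁ * P₁ = M₁ ∧ P₂.transpose * M₂ * P₂ = M₂ ∧
          {w | ∃ z ∈ Γ, w = ((P₁.map (Int.cast : ℤ → ℚ)).mulVec z.1,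
            (P₂.map (Int.cast : ℤ → ℚ)).mulVec z.2)} = Γ') ∧
      -- (b) the restriction map O(Γ, L₂) → O(L₂) is surjective:
      (∀ Γ, IsGoodOverlattice M₁ M₂ Γ →
        ∀ Q₂ : Matrix (Fin n₂) (Fin n₂) ℤ, Q₂.transpose * M₂ * Q₂ = M₂ →
          ∃ g : ((Fin n₁ → ℚ) × (Fin n₂ → ℚ)) ≃ₗ[ℚ] ((Fin n₁ → ℚ) × (Fin n₂ → ℚ)),
            (∀ z w, ratForm M₁ (g z).1 (g w).1 + ratForm M₂ (g z).2 (g w).2 =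
              ratForm M₁ z.1 w.1 + ratForm M₂ z.2 w.2) ∧
            (g '' Γ = Γ) ∧
            (∀ y ∈ intLat n₂, g (0, y) = (0, (Q₂.map (Int.cast : ℤ → ℚ)).mulVec y)))) :
    -- conclusion: O(L₁) → O(q(L₁)) is surjective
    ∀ ψ : discGroup M₁ ≃+ discGroup M₁,
      (∀ x y : dualLat M₁, ψ (discMk M₁ x) = discMk M₁ y →
        ((ratForm M₁ x x : ℚ) : AddCircle (2 : ℚ)) =
          ((ratForm M₁ y y : ℚ) : AddCircle (2 : ℚ))) →
      ∃ P₁ : Matrix (Fin n₁) (Fin n₁) ℤ, P₁.transpose * M₁ * P₁ = M₁ ∧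
        ∀ x y : dualLat M₁,
          (P₁.map (Int.cast : ℤ → ℚ)).mulVec (x : Fin n₁ → ℚ) = (y : Fin n₁ → ℚ) →
          ψ (discMk M₁ x) = discMk M₁ y := by
  obtain ⟨n₂, M₂, hs₂, hd₂, he₂, ⟨Γ, hΓ⟩, huniq, hext⟩ := hL₂
  intro ψ hψ
  obtain ⟨P₁, P₂, hP₁, hP₂, hΓ'⟩ := huniq Γ _ hΓ (twist_good hs₁ ψ hψ hΓ)
  obtain ⟨g, hg, hgΓ, hgQ⟩ := hext Γ hΓ P₂⁻¹ (gram_isometry_inv M₂ hd₂ hP₂)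
  obtain ⟨R, hR, hgR⟩ := extension_splits hd₂ hΓ (gram_isometry_inv M₂ hd₂ hP₂) g hg hgΓ hgQ
  refine ⟨P₁ * R, ?_, ?_⟩
  · rw [transpose_mul]
    calc Rᵀ * P₁ᵀ * M₁ * (P₁ * R) = Rᵀ * (P₁ᵀ * M₁ * P₁) * R := by
          simp only [Matrix.mul_assoc]
      _ = M₁ := by rw [hP₁, hR]
  · intro x y hxy
    obtain ⟨b, hb⟩ := proj_surj hd₁ hΓ x
    have h1 : g (x, b) ∈ Γ := hgΓ ▸ ⟨_, hb, rfl⟩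
    -- `(P₁, P₂)` composed with `g = (R, P₂⁻¹)` is `(P₁ R, 1)`
    have h2 : ((y : Fin n₁ → ℚ), b) ∈ twist ψ Γ := by
      rw [← hΓ']
      refine ⟨_, h1, ?_⟩
      rw [hgR]
      dsimp only
      rw [mulVec_inv_cancel M₂ hd₂ hP₂, mulVec_mulVec, ← hxy]
      congr 2
      exact map_cast_mul _ _
    obtain ⟨a₀, a, ha, ha₀, haψ⟩ := h2
    have hay : y = a := Subtype.ext ha
    rw [hay, ← haψ]
    congr 1
    rw [discMk_eq_iff]
    apply good_left hΓ
    obtain ⟨⟨-, hsub⟩, -⟩ := hΓ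
    simpa using hsub _ hb _ ha₀
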